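/- arXiv:2211.03606 — 2 statements merged into one kernel-verified Lean document; each statement's English description precedes it below -/
import Mathlib

section
/- For any two distinct points a, b ∈ ℝ³ one has ∫_{ℝ³} 1 / (|a−y|² |b−y|²) dy = π³ / |a−b|. -/
open MeasureTheory Real

noncomputable section

/-!
Feynman's parametrisation `1 / (A * B) = ∫₀¹ du / (u * A + (1 - u) * B) ^ 2` turns the integrand
into an average over `u` of `1 / (‖c - y‖ ^ 2 + m ^ 2) ^ 2`, where `c = u • a + (1 - u) • b` and
`m = √(u * (1 - u)) * ‖a - b‖`. By Tonelli one may integrate over `y` first: polar coordinates give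
`π ^ 2 / m`, and the remaining integral of `1 / √(u * (1 - u))` over `(0, 1)` is `π`.
-/

section OneDimensional

lemma lintegral_Ioo_ofReal_eq_sub_of_hasDerivAt_of_nonneg {f f' : ℝ → ℝ} {s t : ℝ} (hst : s ≤ t)
    (hcont : ContinuousOn f (Set.Icc s t)) (hderiv : ∀ x ∈ Set.Ioo s t, HasDerivAt f (f' x) x)
    (hpos : ∀ x ∈ Set.Ioo s t, 0 ≤ f' x) :
    ∫⁻ x in Set.Ioo s t, ENNReal.ofReal (f' x) = ENNReal.ofReal (f t - f s) := by
  have hint : IntegrableOn f' (Set.Ioc s t) :=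
    intervalIntegral.integrableOn_deriv_of_nonneg hcont hderiv hpos
  rw [← intervalIntegral.integral_eq_sub_of_hasDerivAt_of_le hst hcont hderiv
      ((intervalIntegrable_iff_integrableOn_Ioc_of_le hst).2 hint),
    intervalIntegral.integral_of_le hst, integral_Ioc_eq_integral_Ioo,
    ofReal_integral_eq_lintegral_ofReal (hint.mono_set Set.Ioo_subset_Ioc_self)]
  exact ae_restrict_of_forall_mem measurableSet_Ioo hpos

lemma lintegral_Ioo_one_div_convexCombination_sq {A B : ℝ} (hA : 0 < A) (hB : 0 < B) :
    ∫⁻ u in Set.Ioo (0 : ℝ) 1, ENNReal.ofReal (1 / (u * A + (1 - u) * B) ^ 2) =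
      ENNReal.ofReal (1 / (A * B)) := by
  have hpos : ∀ u ∈ Set.Icc (0 : ℝ) 1, 0 < u * A + (1 - u) * B := fun u hu =>
    convex_Ioi (0 : ℝ) hA hB hu.1 (sub_nonneg.2 hu.2) (add_sub_cancel u 1)
  have hderiv : ∀ u ∈ Set.Icc (0 : ℝ) 1,
      HasDerivAt (fun v : ℝ => v / (B * (v * A + (1 - v) * B)))
        (1 / (u * A + (1 - u) * B) ^ 2) u := by
    intro u hu
    have hu_pos := hpos u hu
    have hden : HasDerivAt (fun v : ℝ => B * (v * A + (1 - v) * B)) (B * (1 * A + -1 * B)) u :=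
      (((hasDerivAt_id u).mul_const A).add
        (((hasDerivAt_id u).const_sub 1).mul_const B)).const_mul B
    refine ((hasDerivAt_id u).div hden (by positivity)).congr_deriv ?_
    simp only [id]
    field_simp
    ring
  rw [lintegral_Ioo_ofReal_eq_sub_of_hasDerivAt_of_nonneg zero_le_one
    (fun u hu => (hderiv u hu).continuousAt.continuousWithinAt)
    (fun u hu => hderiv u (Set.Ioo_subset_Icc_self hu)) (fun u _ => by positivity)]
  congr 1
  field_simp
  ring

lemma hasDerivAt_arcsin_two_mul_sub_one {u : ℝ} (hu : u ∈ Set.Ioo (0 : ℝ) 1) :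
    HasDerivAt (fun v => arcsin (2 * v - 1)) (1 / √(u * (1 - u))) u := by
  have hinner : HasDerivAt (fun v : ℝ => 2 * v - 1) (2 * 1) u :=
    ((hasDerivAt_id u).const_mul 2).sub_const 1
  have hsqrt : √(1 - (2 * u - 1) ^ 2) = 2 * √(u * (1 - u)) := by
    rw [show 1 - (2 * u - 1) ^ 2 = 2 ^ 2 * (u * (1 - u)) by ring, sqrt_mul (by norm_num),
      sqrt_sq (by norm_num)]
  have harcsin : HasDerivAt arcsin (1 / √(1 - (2 * u - 1) ^ 2)) (2 * u - 1) :=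
    hasDerivAt_arcsin (by linarith [hu.1]) (by linarith [hu.2])
  refine (harcsin.comp u hinner).congr_deriv ?_
  rw [hsqrt]
  field_simp

lemma lintegral_Ioo_one_div_sqrt_mul_one_sub :
    ∫⁻ u in Set.Ioo (0 : ℝ) 1, ENNReal.ofReal (1 / √(u * (1 - u))) = ENNReal.ofReal π := by
  rw [lintegral_Ioo_ofReal_eq_sub_of_hasDerivAt_of_nonneg zero_le_one (by fun_prop)
    (fun _ => hasDerivAt_arcsin_two_mul_sub_one) (fun u _ => by positivity)]
  norm_num

variable {m : ℝ}

lemma hasDerivAt_arctan_div_sub_div_sq_add_sq (hm : m ≠ 0) (r : ℝ) :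
    HasDerivAt (fun s => 1 / (2 * m) * arctan (s / m) - s / (2 * (s ^ 2 + m ^ 2)))
      (r ^ 2 * (1 / (r ^ 2 + m ^ 2) ^ 2)) r := by
  have harctan := ((hasDerivAt_arctan (r / m)).comp r
    ((hasDerivAt_id r).div_const m)).const_mul (1 / (2 * m))
  have hden : HasDerivAt (fun s : ℝ => 2 * (s ^ 2 + m ^ 2)) (2 * (2 * r)) r := by
    simpa using ((hasDerivAt_pow 2 r).add_const (m ^ 2)).const_mul 2
  refine (harctan.sub ((hasDerivAt_id r).div hden (by positivity))).congr_deriv ?_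
  rw [show 1 + (r / m) ^ 2 = (r ^ 2 + m ^ 2) / m ^ 2 by field_simp; ring]
  simp only [id]
  field_simp
  ring

lemma tendsto_arctan_div_sub_div_sq_add_sq (hm : 0 < m) :
    Filter.Tendsto (fun s => 1 / (2 * m) * arctan (s / m) - s / (2 * (s ^ 2 + m ^ 2)))
      Filter.atTop (nhds (π / (4 * m))) := by
  have harctan : Filter.Tendsto (fun s => arctan (s / m)) Filter.atTop (nhds (π / 2)) :=
    (tendsto_arctan_atTop.mono_right nhdsWithin_le_nhds).comp
      (Filter.tendsto_id.atTop_div_const hm)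
  have hrational : Filter.Tendsto (fun s => s / (2 * (s ^ 2 + m ^ 2))) Filter.atTop (nhds 0) := by
    have hle_inv : ∀ s > 0, s / (2 * (s ^ 2 + m ^ 2)) ≤ s⁻¹ := fun s hs => by
      rw [div_le_iff₀ (by positivity), inv_mul_eq_div, le_div_iff₀ hs]
      nlinarith [sq_nonneg s, sq_nonneg m]
    refine squeeze_zero' ?_ ?_ tendsto_inv_atTop_zero
    all_goals filter_upwards [Filter.eventually_gt_atTop 0] with s hs
    · positivity
    · exact hle_inv s hs
  rw [show π / (4 * m) = 1 / (2 * m) * (π / 2) - 0 by ring]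
  exact (harctan.const_mul _).sub hrational

lemma integrableOn_Ioi_sq_mul_one_div_sq_add_sq_sq (hm : 0 < m) :
    IntegrableOn (fun r : ℝ => r ^ 2 * (1 / (r ^ 2 + m ^ 2) ^ 2)) (Set.Ioi 0) :=
  integrableOn_Ioi_deriv_of_nonneg' (fun r _ => hasDerivAt_arctan_div_sub_div_sq_add_sq hm.ne' r)
    (fun r _ => by positivity) (tendsto_arctan_div_sub_div_sq_add_sq hm)

lemma integral_Ioi_sq_mul_one_div_sq_add_sq_sq (hm : 0 < m) :
    ∫ r in Set.Ioi (0 : ℝ), r ^ 2 * (1 / (r ^ 2 + m ^ 2) ^ 2) = π / (4 * m) := by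
  rw [integral_Ioi_of_hasDerivAt_of_nonneg'
    (fun r _ => hasDerivAt_arctan_div_sub_div_sq_add_sq hm.ne' r)
    (fun r _ => by positivity) (tendsto_arctan_div_sub_div_sq_add_sq hm)]
  simp only [zero_div, arctan_zero, mul_zero, sub_zero]

end OneDimensional

lemma mul_norm_sq_add_one_sub_mul_norm_sq {E : Type*} [NormedAddCommGroup E] [InnerProductSpace ℝ E]
    (x y : E) (u : ℝ) :
    u * ‖x‖ ^ 2 + (1 - u) * ‖y‖ ^ 2 =
      ‖u • x + (1 - u) • y‖ ^ 2 + u * (1 - u) * ‖x - y‖ ^ 2 := by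
  rw [norm_add_sq_real, norm_sub_sq_real, norm_smul, norm_smul, mul_pow, mul_pow, norm_eq_abs,
    norm_eq_abs, sq_abs, sq_abs, real_inner_smul_left, real_inner_smul_right]
  ring

section ThreeDimensional

variable {E : Type*} [NormedAddCommGroup E] [InnerProductSpace ℝ E] [FiniteDimensional ℝ E]
  [MeasurableSpace E] [BorelSpace E]

lemma volume_real_unitBall_of_finrank_eq_three (hE : Module.finrank ℝ E = 3) :
    volume.real (Metric.ball (0 : E) 1) = 4 / 3 * π := by
  rw [measureReal_def, InnerProductSpace.volume_ball_of_dim_odd (k := 1) hE, hE,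
    ENNReal.ofReal_one, one_pow, one_mul, ENNReal.toReal_ofReal (by positivity)]
  norm_num [Nat.doubleFactorial]
  ring

lemma integrable_one_div_norm_sq_add_sq_sq (hE : Module.finrank ℝ E = 3) {m : ℝ} (hm : 0 < m) :
    Integrable fun y : E => 1 / (‖y‖ ^ 2 + m ^ 2) ^ 2 := by
  have : Nontrivial E := Module.nontrivial_of_finrank_pos (R := ℝ) (by omega)
  rw [integrable_fun_norm_addHaar volume (f := fun r : ℝ => 1 / (r ^ 2 + m ^ 2) ^ 2), hE]
  exact integrableOn_Ioi_sq_mul_one_div_sq_add_sq_sq hm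

lemma integral_one_div_norm_sq_add_sq_sq (hE : Module.finrank ℝ E = 3) {m : ℝ} (hm : 0 < m) :
    ∫ y : E, 1 / (‖y‖ ^ 2 + m ^ 2) ^ 2 = π ^ 2 / m := by
  have : Nontrivial E := Module.nontrivial_of_finrank_pos (R := ℝ) (by omega)
  rw [integral_fun_norm_addHaar volume (fun r : ℝ => 1 / (r ^ 2 + m ^ 2) ^ 2), hE,
    volume_real_unitBall_of_finrank_eq_three hE]
  simp only [smul_eq_mul, nsmul_eq_mul, Nat.add_one_sub_one, Nat.cast_ofNat,
    integral_Ioi_sq_mul_one_div_sq_add_sq_sq hm]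
  ring

lemma lintegral_one_div_norm_sub_sq_add_sq_sq (hE : Module.finrank ℝ E = 3) (c : E) {m : ℝ}
    (hm : 0 < m) :
    ∫⁻ y : E, ENNReal.ofReal (1 / (‖c - y‖ ^ 2 + m ^ 2) ^ 2) = ENNReal.ofReal (π ^ 2 / m) := by
  rw [lintegral_sub_left_eq_self (fun y : E => ENNReal.ofReal (1 / (‖y‖ ^ 2 + m ^ 2) ^ 2)) c,
    ← integral_one_div_norm_sq_add_sq_sq hE hm,
    ofReal_integral_eq_lintegral_ofReal (integrable_one_div_norm_sq_add_sq_sq hE hm)]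
  exact Filter.Eventually.of_forall fun y => by positivity

variable {a b : E}

lemma lintegral_one_div_convexCombination_norm_sub_sq_sq (hE : Module.finrank ℝ E = 3)
    (hab : a ≠ b) {u : ℝ} (hu : u ∈ Set.Ioo (0 : ℝ) 1) :
    ∫⁻ y : E, ENNReal.ofReal (1 / (u * ‖a - y‖ ^ 2 + (1 - u) * ‖b - y‖ ^ 2) ^ 2) =
      ENNReal.ofReal (π ^ 2 / ‖a - b‖) * ENNReal.ofReal (1 / √(u * (1 - u))) := by
  have hu_pos : 0 < u * (1 - u) := mul_pos hu.1 (sub_pos.2 hu.2)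
  have hm : 0 < √(u * (1 - u)) * ‖a - b‖ := mul_pos (sqrt_pos.2 hu_pos) (norm_sub_pos_iff.2 hab)
  have hsq (y : E) : u * ‖a - y‖ ^ 2 + (1 - u) * ‖b - y‖ ^ 2 =
      ‖u • a + (1 - u) • b - y‖ ^ 2 + (√(u * (1 - u)) * ‖a - b‖) ^ 2 := by
    rw [mul_norm_sq_add_one_sub_mul_norm_sq, sub_sub_sub_cancel_right, mul_pow, sq_sqrt hu_pos.le,
      show u • (a - y) + (1 - u) • (b - y) = u • a + (1 - u) • b - y by module]
  simp only [hsq]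
  rw [lintegral_one_div_norm_sub_sq_add_sq_sq hE _ hm, ← ENNReal.ofReal_mul (by positivity),
    div_mul_div_comm, mul_one, mul_comm ‖a - b‖]

lemma lintegral_one_div_norm_sub_sq_mul_norm_sub_sq (hE : Module.finrank ℝ E = 3) (hab : a ≠ b) :
    ∫⁻ y : E, ENNReal.ofReal (1 / (‖a - y‖ ^ 2 * ‖b - y‖ ^ 2)) =
      ENNReal.ofReal (π ^ 3 / ‖a - b‖) := by
  have : Nontrivial E := nontrivial_of_ne a b hab
  have : (nhdsWithin (0 : E) {0}ᶜ).NeBot := Module.punctured_nhds_neBot ℝ E 0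
  calc
    _ = ∫⁻ y : E, ∫⁻ u in Set.Ioo (0 : ℝ) 1,
          ENNReal.ofReal (1 / (u * ‖a - y‖ ^ 2 + (1 - u) * ‖b - y‖ ^ 2) ^ 2) := by
      refine lintegral_congr_ae ?_
      filter_upwards [Measure.ae_ne volume a, Measure.ae_ne volume b] with y hya hyb
      exact (lintegral_Ioo_one_div_convexCombination_sq
        (pow_pos (norm_sub_pos_iff.2 hya.symm) 2) (pow_pos (norm_sub_pos_iff.2 hyb.symm) 2)).symm
    _ = ∫⁻ u in Set.Ioo (0 : ℝ) 1, ∫⁻ y : E,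
          ENNReal.ofReal (1 / (u * ‖a - y‖ ^ 2 + (1 - u) * ‖b - y‖ ^ 2) ^ 2) :=
      lintegral_lintegral_swap (by unfold Function.uncurry; fun_prop)
    _ = ∫⁻ u in Set.Ioo (0 : ℝ) 1,
          ENNReal.ofReal (π ^ 2 / ‖a - b‖) * ENNReal.ofReal (1 / √(u * (1 - u))) :=
      setLIntegral_congr_fun measurableSet_Ioo fun u hu =>
        lintegral_one_div_convexCombination_norm_sub_sq_sq hE hab hu
    _ = ENNReal.ofReal (π ^ 2 / ‖a - b‖) * ENNReal.ofReal π := by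
      rw [lintegral_const_mul _ (by fun_prop), lintegral_Ioo_one_div_sqrt_mul_one_sub]
    _ = ENNReal.ofReal (π ^ 3 / ‖a - b‖) := by
      rw [← ENNReal.ofReal_mul (by positivity), div_mul_eq_mul_div, ← pow_succ]

theorem statement3_general (hE : Module.finrank ℝ E = 3) (hab : a ≠ b) :
    ∫ y : E, 1 / (‖a - y‖ ^ 2 * ‖b - y‖ ^ 2) = π ^ 3 / ‖a - b‖ := by
  rw [integral_eq_lintegral_of_nonneg_ae (Filter.Eventually.of_forall fun y => by positivity)
      (Measurable.aestronglyMeasurable (by fun_prop)),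
    lintegral_one_div_norm_sub_sq_mul_norm_sub_sq hE hab, ENNReal.toReal_ofReal (by positivity)]

end ThreeDimensional

/-- For distinct `a, b ∈ ℝ³`,
`∫ 1/(|a−y|²|b−y|²) dy = π³/|a−b|`. -/
theorem statement3 (a b : EuclideanSpace ℝ (Fin 3)) (hab : a ≠ b) :
    ∫ y : EuclideanSpace ℝ (Fin 3), 1 / (‖a - y‖ ^ 2 * ‖b - y‖ ^ 2) =
      π ^ 3 / ‖a - b‖ :=
  statement3_general finrank_euclideanSpace_fin hab
end
end

section
/- Let u ∈ H¹(ℝ³; ℂ) with ‖u‖_{L²} = 1, and define g_u(y) := (1/(2π²)) ∫_{ℝ³} |u(x)|² / |x−y|² dx. Then g_u ∈ L²(ℝ³), its norm satisfies ‖g_u‖²_{L²} = (1/(4π)) ∬_{ℝ³×ℝ³} |u(x)|² |u(y)|² / |x−y| dx dy, and consequently inf_{v ∈ L²(ℝ³;ℂ)} [ ‖∇u‖²_{L²} − 2 Re⟨v, g_u⟩_{L²} + ‖v‖²_{L²} ] = ‖∇u‖²_{L²} − (1/(4π)) ∬_{ℝ³×ℝ³} |u(x)|² |u(y)|² / |x−y|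 dx dy. -/
open MeasureTheory Real

noncomputable section

/-! The Riesz composition formula `|·|⁻² * |·|⁻² = π³ / |·|` in dimension three, proved by writing
both kernels as superpositions of Gaussians, turns `‖g‖²` into a multiple of the Coulomb energy of
`|u|² dx`. The energy is finite because the Coulomb potential is bounded: the unit radial field
around a point has divergence `2 / r`, so integrating by parts bounds it by `‖u‖` and `‖∇u‖`. The
regularity needed for this is gained by mollifying `u` and replacing `r` by `√(r² + δ²)`. Finally,
`‖v‖² - 2 Re ⟨v, g⟩ = ‖v - g‖² - ‖g‖²`, so the infimum over `v` is attained at `v = g`. -/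

open Filter Module Set Topology
open scoped Convolution ContDiff ENNReal NNReal

section GammaIntegrals

lemma lintegral_ofReal_of_integral_ne_zero {α : Type*} [MeasurableSpace α] {μ : Measure α}
    {f : α → ℝ} (hf : 0 ≤ᵐ[μ] f) (h : ∫ x, f x ∂μ ≠ 0) :
    ∫⁻ x, ENNReal.ofReal (f x) ∂μ = ENNReal.ofReal (∫ x, f x ∂μ) :=
  (ofReal_integral_eq_lintegral_ofReal (.of_integral_ne_zero h) hf).symm

variable {a b p q : ℝ}

lemma lintegral_rpow_mul_exp_neg_mul_Ioi (ha : 0 < a) (hp : 0 < p) :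
    ∫⁻ t in Ioi (0 : ℝ), ENNReal.ofReal (t ^ (a - 1) * exp (-(p * t))) =
      ENNReal.ofReal (Gamma a * p ^ (-a)) := by
  have integral_eq : ∫ t in Ioi (0 : ℝ), t ^ (a - 1) * exp (-(p * t)) = Gamma a * p ^ (-a) := by
    rw [integral_rpow_mul_exp_neg_mul_Ioi ha hp, one_div, inv_rpow hp.le, rpow_neg hp.le, mul_comm]
  rw [← integral_eq]
  refine lintegral_ofReal_of_integral_ne_zero ?_ (by rw [integral_eq]; positivity)
  filter_upwards [ae_restrict_mem measurableSet_Ioi] with t (ht : 0 < t)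
  positivity

/-- The Schwinger parametrization, in the variables `(t, t * r)`. -/
lemma lintegral_lintegral_rpow_mul_rpow_mul_exp (ha : 0 < a) (hb : 0 < b) (hp : 0 < p)
    (hq : 0 < q) :
    ∫⁻ r in Ioi (0 : ℝ), ∫⁻ t in Ioi (0 : ℝ),
        ENNReal.ofReal (r ^ (b - 1) * t ^ (a + b - 1) * exp (-(t * p + t * r * q))) =
      ENNReal.ofReal (Gamma a * Gamma b * (p ^ (-a) * q ^ (-b))) := by
  have inner_integral : ∀ t ∈ Ioi (0 : ℝ), ∫⁻ r in Ioi (0 : ℝ),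
      ENNReal.ofReal (r ^ (b - 1) * t ^ (a + b - 1) * exp (-(t * p + t * r * q))) =
        ENNReal.ofReal (Gamma b * q ^ (-b)) *
          ENNReal.ofReal (t ^ (a - 1) * exp (-(p * t))) := by
    intro t (ht : 0 < t)
    have split : ∀ r ∈ Ioi (0 : ℝ),
        ENNReal.ofReal (r ^ (b - 1) * t ^ (a + b - 1) * exp (-(t * p + t * r * q))) =
          ENNReal.ofReal (t ^ (a + b - 1) * exp (-(p * t))) *
            ENNReal.ofReal (r ^ (b - 1) * exp (-(t * q * r))) := by
      intro r _
      rw [← ENNReal.ofReal_mul (by positivity), neg_add, exp_add]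
      ring_nf
    rw [setLIntegral_congr_fun measurableSet_Ioi split, lintegral_const_mul _ (by fun_prop),
      lintegral_rpow_mul_exp_neg_mul_Ioi hb (by positivity), ← ENNReal.ofReal_mul (by positivity),
      ← ENNReal.ofReal_mul (mul_nonneg (Gamma_pos_of_pos hb).le (by positivity)),
      mul_rpow ht.le hq.le, show a + b - 1 = (a - 1) + b by ring, rpow_add ht, rpow_neg ht.le]
    congr 1
    field_simp
  rw [lintegral_lintegral_swap (by fun_prop),
    setLIntegral_congr_fun measurableSet_Ioi inner_integral, lintegral_const_mul _ (by fun_prop),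
    lintegral_rpow_mul_exp_neg_mul_Ioi ha hp,
    ← ENNReal.ofReal_mul (mul_nonneg (Gamma_pos_of_pos hb).le (by positivity))]
  ring_nf

lemma lintegral_rpow_mul_one_add_rpow_Ioi (ha : 0 < a) (hb : 0 < b) :
    ∫⁻ r in Ioi (0 : ℝ), ENNReal.ofReal (r ^ (b - 1) * (1 + r) ^ (-(a + b))) =
      ENNReal.ofReal (Gamma a * Gamma b / Gamma (a + b)) := by
  have hGamma := Gamma_pos_of_pos (add_pos ha hb)
  have inner_integral : ∀ r ∈ Ioi (0 : ℝ), ∫⁻ t in Ioi (0 : ℝ),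
      ENNReal.ofReal (r ^ (b - 1) * t ^ (a + b - 1) * exp (-(t * 1 + t * r * 1))) =
        ENNReal.ofReal (Gamma (a + b)) * ENNReal.ofReal (r ^ (b - 1) * (1 + r) ^ (-(a + b))) := by
    intro r (hr : 0 < r)
    have split : ∀ t : ℝ,
        ENNReal.ofReal (r ^ (b - 1) * t ^ (a + b - 1) * exp (-(t * 1 + t * r * 1))) =
          ENNReal.ofReal (r ^ (b - 1)) *
            ENNReal.ofReal (t ^ (a + b - 1) * exp (-((1 + r) * t))) := by
      intro t
      rw [← ENNReal.ofReal_mul (by positivity)]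
      ring_nf
    simp_rw [split]
    rw [lintegral_const_mul _ (by fun_prop),
      lintegral_rpow_mul_exp_neg_mul_Ioi (add_pos ha hb) (by positivity),
      ← ENNReal.ofReal_mul (by positivity), ← ENNReal.ofReal_mul hGamma.le, mul_left_comm]
  have double_integral := lintegral_lintegral_rpow_mul_rpow_mul_exp ha hb one_pos one_pos
  rw [setLIntegral_congr_fun measurableSet_Ioi inner_integral, lintegral_const_mul _ (by fun_prop),
    one_rpow, one_rpow, mul_one, mul_one] at double_integral
  rw [ENNReal.ofReal_div_of_pos hGamma, ENNReal.eq_div_iff (by simpa using hGamma)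
    ENNReal.ofReal_ne_top, double_integral]

lemma lintegral_lintegral_rpow_mul_gaussian {d : ℝ} (ha : a < d) (hb : b < d) (hab : d < a + b)
    (hq : 0 < q) :
    ∫⁻ r in Ioi (0 : ℝ), ∫⁻ t in Ioi (0 : ℝ), ENNReal.ofReal (r ^ (b - 1) * t ^ (a + b - 1) *
        ((π / (t + t * r)) ^ d * exp (-(t * (t * r) / (t + t * r) * q)))) =
      ENNReal.ofReal (π ^ d * Gamma (a + b - d) * q ^ (d - a - b) *
        (Gamma (d - b) * Gamma (d - a) / Gamma (d - b + (d - a)))) := by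
  have hGamma := Gamma_pos_of_pos (sub_pos.2 hab)
  have inner_integral : ∀ r ∈ Ioi (0 : ℝ),
      ∫⁻ t in Ioi (0 : ℝ), ENNReal.ofReal (r ^ (b - 1) * t ^ (a + b - 1) *
        ((π / (t + t * r)) ^ d * exp (-(t * (t * r) / (t + t * r) * q)))) =
      ENNReal.ofReal (π ^ d * Gamma (a + b - d) * q ^ (d - a - b)) *
        ENNReal.ofReal (r ^ (d - a - 1) * (1 + r) ^ (-(d - b + (d - a)))) := by
    intro r (hr : 0 < r)
    have split : ∀ t ∈ Ioi (0 : ℝ), ENNReal.ofReal (r ^ (b - 1) * t ^ (a + b - 1) *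
          ((π / (t + t * r)) ^ d * exp (-(t * (t * r) / (t + t * r) * q)))) =
        ENNReal.ofReal (r ^ (b - 1) * (π / (1 + r)) ^ d) *
          ENNReal.ofReal (t ^ (a + b - d - 1) * exp (-(r / (1 + r) * q * t))) := by
      intro t (ht : 0 < t)
      have gaussian_mass : (π / (t + t * r)) ^ d = (π / (1 + r)) ^ d * t ^ (-d) := by
        rw [rpow_neg ht.le, ← inv_rpow ht.le, ← mul_rpow (by positivity) (by positivity)]
        congr 1
        field_simp
      have exponent : t * (t * r) / (t + t * r) * q = r / (1 + r) * q * t := by field_simp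
      rw [← ENNReal.ofReal_mul (by positivity), gaussian_mass, exponent,
        show a + b - d - 1 = a + b - 1 + -d by ring, rpow_add ht]
      ring_nf
    rw [setLIntegral_congr_fun measurableSet_Ioi split, lintegral_const_mul _ (by fun_prop),
      lintegral_rpow_mul_exp_neg_mul_Ioi (sub_pos.2 hab) (by positivity),
      ← ENNReal.ofReal_mul (by positivity), ← ENNReal.ofReal_mul (by positivity),
      mul_rpow (by positivity) hq.le, div_rpow hr.le (by positivity),
      div_rpow pi_pos.le (by positivity), show d - a - 1 = (b - 1) + -(a + b - d) by ring,
      rpow_add hr, show -(d - b + (d - a)) = -d - -(a + b - d) by ring,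
      rpow_sub (by positivity : 0 < 1 + r), rpow_neg (by positivity : 0 ≤ 1 + r) d, neg_sub,
      ← sub_sub]
    congr 1
    field_simp
  rw [setLIntegral_congr_fun measurableSet_Ioi inner_integral, lintegral_const_mul _ (by fun_prop),
    lintegral_rpow_mul_one_add_rpow_Ioi (sub_pos.2 hb) (sub_pos.2 ha),
    ← ENNReal.ofReal_mul (by positivity)]

end GammaIntegrals

section RieszKernel

lemma norm_sq_rpow {V : Type*} [SeminormedAddGroup V] (x : V) (s : ℝ) :
    (‖x‖ ^ 2) ^ s = ‖x‖ ^ (2 * s) := by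
  rw [rpow_mul (norm_nonneg x), rpow_two]

variable {V : Type*} [NormedAddCommGroup V]

lemma lintegral_lintegral_rpow_mul_exp_norm_sub_sq {a b : ℝ} (ha : 0 < a) (hb : 0 < b) {x y z : V}
    (hx : x ≠ y) (hz : z ≠ y) :
    ∫⁻ r in Ioi (0 : ℝ), ∫⁻ t in Ioi (0 : ℝ), ENNReal.ofReal (r ^ (b - 1) * t ^ (a + b - 1) *
        exp (-(t * ‖x - y‖ ^ 2 + t * r * ‖z - y‖ ^ 2))) =
      ENNReal.ofReal (Gamma a * Gamma b) *
        (ENNReal.ofReal (‖x - y‖ ^ (2 * -a)) * ENNReal.ofReal (‖z - y‖ ^ (2 * -b))) := by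
  have hx : 0 < ‖x - y‖ := norm_pos_iff.2 (sub_ne_zero.2 hx)
  have hz : 0 < ‖z - y‖ := norm_pos_iff.2 (sub_ne_zero.2 hz)
  have hGamma := mul_pos (Gamma_pos_of_pos ha) (Gamma_pos_of_pos hb)
  rw [lintegral_lintegral_rpow_mul_rpow_mul_exp ha hb (by positivity) (by positivity),
    norm_sq_rpow, norm_sq_rpow, ← ENNReal.ofReal_mul (by positivity),
    ← ENNReal.ofReal_mul hGamma.le]

variable [InnerProductSpace ℝ V]

lemma mul_norm_sub_sq_add_mul_norm_sub_sq {t r : ℝ} (h : t + r ≠ 0) (x z y : V) :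
    t * ‖x - y‖ ^ 2 + r * ‖z - y‖ ^ 2 =
      (t + r) * ‖y - (t + r)⁻¹ • (t • x + r • z)‖ ^ 2 + t * r / (t + r) * ‖x - z‖ ^ 2 := by
  simp only [norm_sub_sq_real, inner_smul_right, inner_add_right, norm_smul, norm_add_sq_real,
    inner_smul_left, mul_pow, norm_inv, inv_pow, Real.norm_eq_abs, sq_abs, conj_trivial,
    real_inner_comm x y, real_inner_comm z y]
  field_simp
  ring

variable [FiniteDimensional ℝ V] [MeasurableSpace V] [BorelSpace V]

lemma lintegral_exp_neg_mul_norm_sub_sq_add {t r : ℝ} (h : 0 < t + r) (x z : V) :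
    ∫⁻ y, ENNReal.ofReal (exp (-(t * ‖x - y‖ ^ 2 + r * ‖z - y‖ ^ 2))) =
      ENNReal.ofReal ((π / (t + r)) ^ (finrank ℝ V / 2 : ℝ) *
        exp (-(t * r / (t + r) * ‖x - z‖ ^ 2))) := by
  have integral_eq : ∫ y, exp (-(t * ‖x - y‖ ^ 2 + r * ‖z - y‖ ^ 2)) =
      (π / (t + r)) ^ (finrank ℝ V / 2 : ℝ) * exp (-(t * r / (t + r) * ‖x - z‖ ^ 2)) := by
    simp_rw [mul_norm_sub_sq_add_mul_norm_sub_sq h.ne' x z, neg_add, exp_add, ← neg_mul]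
    rw [integral_mul_const, integral_sub_right_eq_self fun y : V ↦ exp (-(t + r) * ‖y‖ ^ 2),
      GaussianFourier.integral_rexp_neg_mul_sq_norm h]
  rw [← integral_eq]
  exact lintegral_ofReal_of_integral_ne_zero (.of_forall fun y ↦ (exp_pos _).le)
    (by rw [integral_eq]; positivity)

/-- The factor by which the composition of the Riesz kernels `|x| ^ (-α)` and `|x| ^ (-β)` on
`ℝ ^ d` differs from `|x| ^ (d - α - β)`. -/
def rieszCompositionConst (d α β : ℝ) : ℝ :=
  π ^ (d / 2) * (Gamma ((d - α) / 2) * Gamma ((d - β) / 2) * Gamma ((α + β - d) / 2)) /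
    (Gamma (α / 2) * Gamma (β / 2) * Gamma (d - (α + β) / 2))

lemma rieszCompositionConst_three_two_two : rieszCompositionConst 3 2 2 = π ^ 3 := by
  have pi_rpow : π ^ (3 / 2 : ℝ) = π * √π := by
    rw [sqrt_eq_rpow, ← rpow_one_add' pi_pos.le (by norm_num)]
    norm_num
  rw [rieszCompositionConst, pi_rpow, show ((3 : ℝ) - 2) / 2 = 1 / 2 by norm_num,
    show ((2 : ℝ) + 2 - 3) / 2 = 1 / 2 by norm_num, show (2 : ℝ) / 2 = 1 by norm_num,
    show (3 : ℝ) - (2 + 2) / 2 = 1 by norm_num, Gamma_one, Gamma_one_half_eq]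
  calc π * √π * (√π * √π * √π) / (1 * 1 * 1) = π * (√π ^ 2) ^ 2 := by ring
    _ = π ^ 3 := by rw [sq_sqrt pi_pos.le]; ring

lemma lintegral_lintegral_lintegral_rpow_mul_exp_norm_sub_sq {a b : ℝ}
    (ha : a < finrank ℝ V / 2) (hb : b < finrank ℝ V / 2) (hab : finrank ℝ V / 2 < a + b) {x z : V}
    (hxz : x ≠ z) :
    ∫⁻ y, ∫⁻ r in Ioi (0 : ℝ), ∫⁻ t in Ioi (0 : ℝ), ENNReal.ofReal (r ^ (b - 1) *
        t ^ (a + b - 1) * exp (-(t * ‖x - y‖ ^ 2 + t * r * ‖z - y‖ ^ 2))) =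
      ENNReal.ofReal (π ^ (finrank ℝ V / 2 : ℝ) * Gamma (a + b - finrank ℝ V / 2) *
        ‖x - z‖ ^ (2 * (finrank ℝ V / 2 - a - b)) *
        (Gamma (finrank ℝ V / 2 - b) * Gamma (finrank ℝ V / 2 - a) /
          Gamma (finrank ℝ V / 2 - b + (finrank ℝ V / 2 - a)))) := by
  have hxz : 0 < ‖x - z‖ := norm_pos_iff.2 (sub_ne_zero.2 hxz)
  let F (r t : ℝ) (y : V) := ENNReal.ofReal (r ^ (b - 1) * t ^ (a + b - 1) *
    exp (-(t * ‖x - y‖ ^ 2 + t * r * ‖z - y‖ ^ 2)))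
  have gaussian_mass : ∀ r ∈ Ioi (0 : ℝ), ∀ t ∈ Ioi (0 : ℝ), ∫⁻ y, F r t y =
      ENNReal.ofReal (r ^ (b - 1) * t ^ (a + b - 1) * ((π / (t + t * r)) ^ (finrank ℝ V / 2 : ℝ) *
        exp (-(t * (t * r) / (t + t * r) * ‖x - z‖ ^ 2)))) := by
    intro r (hr : 0 < r) t (ht : 0 < t)
    have hc : 0 ≤ r ^ (b - 1) * t ^ (a + b - 1) := by positivity
    simp_rw [F, ENNReal.ofReal_mul hc]
    rw [lintegral_const_mul _ (by fun_prop),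
      lintegral_exp_neg_mul_norm_sub_sq_add (by positivity) x z]
  have swap : ∫⁻ y, ∫⁻ r in Ioi (0 : ℝ), ∫⁻ t in Ioi (0 : ℝ), F r t y =
      ∫⁻ r in Ioi (0 : ℝ), ∫⁻ t in Ioi (0 : ℝ), ∫⁻ y, F r t y := by
    have hF : Measurable fun p : (V × ℝ) × ℝ ↦ F p.1.2 p.2 p.1.1 := by fun_prop
    rw [lintegral_lintegral_swap hF.lintegral_prod_right'.aemeasurable]
    exact lintegral_congr fun r ↦ lintegral_lintegral_swap (by fun_prop)
  rw [swap, setLIntegral_congr_fun measurableSet_Ioi fun r hr ↦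
      setLIntegral_congr_fun measurableSet_Ioi (gaussian_mass r hr),
    lintegral_lintegral_rpow_mul_gaussian ha hb hab (by positivity), norm_sq_rpow]

/-- A product of two Riesz kernels is a superposition of Gaussians, whose masses are explicit. -/
theorem lintegral_norm_sub_rpow_mul_norm_sub_rpow {α β : ℝ} (hα : 0 < α) (hαd : α < finrank ℝ V)
    (hβ : 0 < β) (hβd : β < finrank ℝ V) (hαβ : finrank ℝ V < α + β) {x z : V} (hxz : x ≠ z) :
    ∫⁻ y, ENNReal.ofReal (‖x - y‖ ^ (-α)) * ENNReal.ofReal (‖z - y‖ ^ (-β)) =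
      ENNReal.ofReal (rieszCompositionConst (finrank ℝ V) α β) *
        ENNReal.ofReal (‖x - z‖ ^ (finrank ℝ V - α - β)) := by
  have : Nontrivial V := ⟨x, z, hxz⟩
  have hGamma : 0 < Gamma (α / 2) * Gamma (β / 2) :=
    mul_pos (Gamma_pos_of_pos (by positivity)) (Gamma_pos_of_pos (by positivity))
  have superposition : ∀ᵐ y, ∫⁻ r in Ioi (0 : ℝ), ∫⁻ t in Ioi (0 : ℝ),
        ENNReal.ofReal (r ^ (β / 2 - 1) * t ^ (α / 2 + β / 2 - 1) *
          exp (-(t * ‖x - y‖ ^ 2 + t * r * ‖z - y‖ ^ 2))) =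
      ENNReal.ofReal (Gamma (α / 2) * Gamma (β / 2)) *
        (ENNReal.ofReal (‖x - y‖ ^ (-α)) * ENNReal.ofReal (‖z - y‖ ^ (-β))) := by
    filter_upwards [volume.ae_ne x, volume.ae_ne z] with y hx hz
    rw [lintegral_lintegral_rpow_mul_exp_norm_sub_sq (by positivity) (by positivity) hx.symm
      hz.symm, mul_neg, mul_neg, mul_div_cancel₀ α two_ne_zero, mul_div_cancel₀ β two_ne_zero]
  have gaussian_integral := lintegral_lintegral_lintegral_rpow_mul_exp_norm_sub_sq (a := α / 2)
    (b := β / 2) (by linarith) (by linarith) (by linarith) hxz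
  rw [lintegral_congr_ae superposition, lintegral_const_mul _ (by fun_prop),
    ← ENNReal.eq_div_iff (by simpa using hGamma) ENNReal.ofReal_ne_top,
    ← ENNReal.ofReal_div_of_pos hGamma] at gaussian_integral
  rw [← ENNReal.ofReal_mul' (by positivity), gaussian_integral, rieszCompositionConst]
  ring_nf

end RieszKernel

section SquareIntegrable

variable {X : Type*} [MeasurableSpace X] {μ : Measure X}

lemma memLp_two_toReal {h : X → ℝ≥0∞} (hh : AEMeasurable h μ) (hfin : ∫⁻ x, h x ^ 2 ∂μ ≠ ⊤) :
    MemLp (fun x ↦ (h x).toReal) 2 μ := by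
  rw [memLp_two_iff_integrable_sq hh.ennreal_toReal.aestronglyMeasurable]
  simp_rw [← ENNReal.toReal_pow]
  exact integrable_toReal_of_lintegral_ne_top (hh.pow_const 2) hfin

lemma integral_toReal_sq {h : X → ℝ≥0∞} (hh : AEMeasurable h μ) (hfin : ∫⁻ x, h x ^ 2 ∂μ ≠ ⊤) :
    ∫ x, (h x).toReal ^ 2 ∂μ = (∫⁻ x, h x ^ 2 ∂μ).toReal := by
  simp_rw [← ENNReal.toReal_pow]
  exact integral_toReal (hh.pow_const 2) (ae_lt_top' (hh.pow_const 2) hfin)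

end SquareIntegrable

section RieszEnergy

lemma lintegral_sq_lintegral {X Y : Type*} [MeasurableSpace X] [MeasurableSpace Y] {μ : Measure X}
    {ν : Measure Y} [SFinite μ] [SFinite ν] {k : X → Y → ℝ≥0∞} (hk : Measurable k.uncurry) :
    ∫⁻ y, (∫⁻ x, k x y ∂μ) ^ 2 ∂ν = ∫⁻ x, ∫⁻ z, ∫⁻ y, k x y * k z y ∂ν ∂μ ∂μ := by
  have hk_left (y : Y) : Measurable fun x ↦ k x y := hk.of_uncurry_right
  have hk_joint : Measurable fun p : (Y × X) × X ↦ k p.1.2 p.1.1 * k p.2 p.1.1 :=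
    (hk.comp (by fun_prop : Measurable fun p : (Y × X) × X ↦ (p.1.2, p.1.1))).mul
      (hk.comp (by fun_prop : Measurable fun p : (Y × X) × X ↦ (p.2, p.1.1)))
  calc ∫⁻ y, (∫⁻ x, k x y ∂μ) ^ 2 ∂ν = ∫⁻ y, ∫⁻ x, ∫⁻ z, k x y * k z y ∂μ ∂μ ∂ν := by
        simp_rw [sq, ← lintegral_mul_const _ (hk_left _), ← lintegral_const_mul _ (hk_left _)]
    _ = ∫⁻ x, ∫⁻ y, ∫⁻ z, k x y * k z y ∂μ ∂ν ∂μ :=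
        lintegral_lintegral_swap hk_joint.lintegral_prod_right'.aemeasurable
    _ = ∫⁻ x, ∫⁻ z, ∫⁻ y, k x y * k z y ∂ν ∂μ ∂μ :=
        lintegral_congr fun x ↦ lintegral_lintegral_swap
          (hk_joint.comp (by fun_prop : Measurable fun p : Y × X ↦ ((p.1, x), p.2))).aemeasurable

variable {V : Type*} [NormedAddCommGroup V] [MeasurableSpace V]

/-- The Riesz potential `|·| ^ (-s) * μ`. In dimension three, `s = 1` gives the Coulomb potential
of the charge distribution `μ`. -/
def rieszPotential (s : ℝ) (μ : Measure V) (y : V) : ℝ≥0∞ :=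
  ∫⁻ x, ENNReal.ofReal (‖x - y‖ ^ (-s)) ∂μ

/-- The Riesz energy `∬ |x - y| ^ (-s) dμ(x) dμ(y)`. In dimension three, `s = 1` gives the Coulomb
energy of the charge distribution `μ`. -/
def rieszEnergy (s : ℝ) (μ : Measure V) : ℝ≥0∞ :=
  ∫⁻ y, rieszPotential s μ y ∂μ

lemma rieszEnergy_lt_top {μ : Measure V} [IsFiniteMeasure μ] {s : ℝ} {C : ℝ≥0}
    (h : ∀ y, rieszPotential s μ y ≤ C) : rieszEnergy s μ < ⊤ := by
  refine (lintegral_mono h).trans_lt ?_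
  rw [lintegral_const]
  exact ENNReal.mul_lt_top ENNReal.coe_lt_top (measure_lt_top μ _)

variable [BorelSpace V] (μ : Measure V) [SFinite μ]

lemma measurable_rieszPotential [SecondCountableTopology V] (s : ℝ) :
    Measurable (rieszPotential s μ) :=
  Measurable.lintegral_prod_right'
    (f := fun p : V × V ↦ ENNReal.ofReal (‖p.2 - p.1‖ ^ (-s))) (by fun_prop)

theorem lintegral_rieszPotential_sq [InnerProductSpace ℝ V] [FiniteDimensional ℝ V]
    [NullSingletonClass μ] {s : ℝ} (hs : finrank ℝ V / 2 < s) (hsd : s < finrank ℝ V) :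
    ∫⁻ y, rieszPotential s μ y ^ 2 =
      ENNReal.ofReal (rieszCompositionConst (finrank ℝ V) s s) *
        rieszEnergy (2 * s - finrank ℝ V) μ := by
  have hs_pos : 0 < s := by linarith
  have composition (x : V) : ∀ᵐ z ∂μ,
      ∫⁻ y, ENNReal.ofReal (‖x - y‖ ^ (-s)) * ENNReal.ofReal (‖z - y‖ ^ (-s)) =
        ENNReal.ofReal (rieszCompositionConst (finrank ℝ V) s s) *
          ENNReal.ofReal (‖z - x‖ ^ (-(2 * s - finrank ℝ V))) := by
    filter_upwards [μ.ae_ne x] with z hz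
    rw [lintegral_norm_sub_rpow_mul_norm_sub_rpow hs_pos hsd hs_pos hsd (by linarith) hz.symm,
      norm_sub_rev]
    ring_nf
  simp_rw [rieszPotential]
  rw [lintegral_sq_lintegral (by fun_prop)]
  simp_rw [lintegral_congr_ae (composition _)]
  rw [lintegral_congr fun x ↦ lintegral_const_mul _ (by fun_prop)]
  exact lintegral_const_mul _ (measurable_rieszPotential μ _)

lemma lintegral_rieszPotential_two_sq [InnerProductSpace ℝ V] [FiniteDimensional ℝ V]
    (hV : finrank ℝ V = 3) [NullSingletonClass μ] :
    ∫⁻ y, rieszPotential 2 μ y ^ 2 = ENNReal.ofReal (π ^ 3) * rieszEnergy 1 μ := by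
  rw [lintegral_rieszPotential_sq μ (by norm_num [hV]) (by norm_num [hV]), hV]
  norm_num [rieszCompositionConst_three_two_two]

lemma memLp_toReal_rieszPotential_two [InnerProductSpace ℝ V] [FiniteDimensional ℝ V]
    (hV : finrank ℝ V = 3) [NullSingletonClass μ] (hfin : rieszEnergy 1 μ ≠ ⊤) :
    MemLp (fun y ↦ (rieszPotential 2 μ y).toReal) 2 := by
  refine memLp_two_toReal (measurable_rieszPotential μ 2).aemeasurable ?_
  rw [lintegral_rieszPotential_two_sq μ hV]
  exact ENNReal.mul_ne_top ENNReal.ofReal_ne_top hfin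

lemma integral_toReal_rieszPotential_two_sq [InnerProductSpace ℝ V] [FiniteDimensional ℝ V]
    (hV : finrank ℝ V = 3) [NullSingletonClass μ] (hfin : rieszEnergy 1 μ ≠ ⊤) :
    ∫ y, (rieszPotential 2 μ y).toReal ^ 2 = π ^ 3 * (rieszEnergy 1 μ).toReal := by
  have potential_sq := lintegral_rieszPotential_two_sq μ hV
  rw [integral_toReal_sq (measurable_rieszPotential μ 2).aemeasurable, potential_sq,
    ENNReal.toReal_mul, ENNReal.toReal_ofReal (by positivity)]
  exact potential_sq ▸ ENNReal.mul_ne_top ENNReal.ofReal_ne_top hfin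

end RieszEnergy

section Mollification

variable {E F : Type*} [NormedAddCommGroup E] [InnerProductSpace ℝ E] [FiniteDimensional ℝ E]
  [MeasurableSpace E] [BorelSpace E] [NormedAddCommGroup F] [NormedSpace ℝ F]

lemma eLpNorm_convolution_le {η : E → ℝ} (hη : Measurable η) (hη_nonneg : ∀ x, 0 ≤ η x)
    (hη_mass : ∫⁻ x, ENNReal.ofReal (η x) = 1) {f : E → F} (hf : AEStronglyMeasurable f)
    {p : ℝ≥0} (hp : 1 ≤ p) :
    eLpNorm (η ⋆[ContinuousLinearMap.lsmul ℝ ℝ, volume] f) p ≤ eLpNorm f p := by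
  have hp_pos : 0 < p := one_pos.trans_le hp
  let ν : Measure E := volume.withDensity fun x ↦ ENNReal.ofReal (η x)
  have : IsProbabilityMeasure ν := ⟨by simp [ν, hη_mass]⟩
  have hf_sub : AEStronglyMeasurable (fun z : E × E ↦ f (z.1 - z.2)) (volume.prod ν) :=
    hf.comp_quasiMeasurePreserving (quasiMeasurePreserving_sub_of_right_invariant volume ν)
  have hf_sub_left (x : E) : AEStronglyMeasurable (fun t ↦ f (x - t)) :=
    hf.comp_quasiMeasurePreserving (quasiMeasurePreserving_sub_left volume x)
  have jensen (x : E) : ‖(η ⋆[ContinuousLinearMap.lsmul ℝ ℝ, volume] f) x‖ₑ ^ (p : ℝ) ≤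
      ∫⁻ t, ‖f (x - t)‖ₑ ^ (p : ℝ) ∂ν := by
    rw [← eLpNorm_nnreal_pow_eq_lintegral hp_pos.ne']
    gcongr
    calc ‖(η ⋆[ContinuousLinearMap.lsmul ℝ ℝ, volume] f) x‖ₑ
        ≤ ∫⁻ t, ‖η t • f (x - t)‖ₑ := enorm_integral_le_lintegral_enorm _
      _ = eLpNorm (fun t ↦ f (x - t)) 1 ν := by
        rw [eLpNorm_one_eq_lintegral_enorm, lintegral_withDensity_eq_lintegral_mul₀
          (by fun_prop) (hf_sub_left x).enorm]
        simp_rw [enorm_smul, Real.enorm_of_nonneg (hη_nonneg _), Pi.mul_apply]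
      _ ≤ eLpNorm (fun t ↦ f (x - t)) p ν :=
        eLpNorm_le_eLpNorm_of_exponent_le (by exact_mod_cast hp)
          ((hf_sub_left x).mono_ac (withDensity_absolutelyContinuous _ _))
  rw [← ENNReal.rpow_le_rpow_iff (by exact_mod_cast hp_pos : (0 : ℝ) < p),
    eLpNorm_nnreal_pow_eq_lintegral hp_pos.ne', eLpNorm_nnreal_pow_eq_lintegral hp_pos.ne']
  calc ∫⁻ x, ‖(η ⋆[ContinuousLinearMap.lsmul ℝ ℝ, volume] f) x‖ₑ ^ (p : ℝ)
      ≤ ∫⁻ x, ∫⁻ t, ‖f (x - t)‖ₑ ^ (p : ℝ) ∂ν := lintegral_mono jensen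
    _ = ∫⁻ t, (∫⁻ x, ‖f (x - t)‖ₑ ^ (p : ℝ)) ∂ν :=
      lintegral_lintegral_swap (hf_sub.enorm.pow_const _)
    _ = ∫⁻ x, ‖f x‖ₑ ^ (p : ℝ) := by
      rw [lintegral_congr fun t ↦ lintegral_sub_right_eq_self (fun x ↦ ‖f x‖ₑ ^ (p : ℝ)) t,
        lintegral_const, measure_univ, mul_one]

/-- `f'` is the derivative of `f` along `v` in the sense of distributions. -/
def HasWeakLineDeriv (f f' : E → F) (v : E) : Prop :=
  ∀ φ : E → ℝ, ContDiff ℝ ∞ φ → HasCompactSupport φ →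
    ∫ x, fderiv ℝ φ x v • f x = -∫ x, φ x • f' x

lemma HasWeakLineDeriv.hasLineDerivAt_convolution {f f' : E → F} {v : E}
    (h : HasWeakLineDeriv f f' v) (hf : LocallyIntegrable f) {η : E → ℝ}
    (hη : ContDiff ℝ ∞ η) (hη_supp : HasCompactSupport η) (x : E) :
    HasLineDerivAt ℝ (η ⋆[ContinuousLinearMap.lsmul ℝ ℝ, volume] f)
      ((η ⋆[ContinuousLinearMap.lsmul ℝ ℝ, volume] f') x) x v := by
  have hη_one : ContDiff ℝ 1 η := hη.of_le (by exact_mod_cast le_top)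
  have fderiv_reflect (t : E) : fderiv ℝ (fun t ↦ η (x - t)) t v = -fderiv ℝ η (x - t) v := by
    have := ((hη_one.differentiable one_ne_zero (x - t)).hasFDerivAt.comp t
      ((hasFDerivAt_id t).const_sub x)).fderiv
    simp only [Function.comp_def] at this
    simp [this]
  have weak := h _ (hη.comp (contDiff_const.sub contDiff_id))
    (hη_supp.comp_homeomorph (Homeomorph.subLeft x))
  have deriv := (hη_supp.hasFDerivAt_convolution_right
    (ContinuousLinearMap.lsmul ℝ ℝ : ℝ →L[ℝ] F →L[ℝ] F).flip hf hη_one x).hasLineDerivAt v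
  rw [convolution_precompR_apply _ hf (hη_supp.fderiv ℝ) (hη_one.continuous_fderiv one_ne_zero),
    convolution_flip] at deriv
  convert deriv using 1
  rw [← convolution_flip, convolution_def, convolution_def]
  simp only [ContinuousLinearMap.flip_apply, ContinuousLinearMap.lsmul_apply]
  simpa only [fderiv_reflect, neg_smul, integral_neg, neg_inj, Function.comp_def, id]
    using weak.symm

/-- The bump functions used to mollify: their supports shrink to the origin. -/
def shrinkingBump (n : ℕ) : ContDiffBump (0 : E) where
  rIn := 1 / (n + 1)
  rOut := 2 * (1 / (n + 1))
  rIn_pos := by positivity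
  rIn_lt_rOut := lt_two_mul_self (by positivity)

/-- The `n`-th mollification of `f`. -/
def mollify (n : ℕ) (f : E → F) : E → F :=
  (shrinkingBump n).normed volume ⋆[ContinuousLinearMap.lsmul ℝ ℝ, volume] f

lemma ae_tendsto_mollify [CompleteSpace F] {f : E → F} (hf : LocallyIntegrable f) :
    ∀ᵐ x, Tendsto (fun n ↦ mollify n f x) atTop (𝓝 (f x)) := by
  refine ContDiffBump.ae_convolution_tendsto_right_of_locallyIntegrable (K := 2) ?_
    (.of_forall fun n ↦ le_rfl) hf
  simpa [shrinkingBump] using tendsto_one_div_add_atTop_nhds_zero_nat.const_mul (2 : ℝ)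

lemma continuous_mollify (n : ℕ) {f : E → F} (hf : LocallyIntegrable f) :
    Continuous (mollify n f) :=
  (shrinkingBump n).hasCompactSupport_normed.continuous_convolution_left _
    (shrinkingBump n).continuous_normed hf

lemma eLpNorm_mollify_le (n : ℕ) {f : E → F} (hf : AEStronglyMeasurable f) {p : ℝ≥0} (hp : 1 ≤ p) :
    eLpNorm (mollify n f) p ≤ eLpNorm f p := by
  refine eLpNorm_convolution_le (shrinkingBump n).continuous_normed.measurable
    (shrinkingBump n).nonneg_normed ?_ hf hp
  rw [lintegral_ofReal_of_integral_ne_zero (.of_forall (shrinkingBump n).nonneg_normed)] <;>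
    simp [(shrinkingBump n).integral_normed]

lemma memLp_mollify (n : ℕ) {f : E → F} {p : ℝ≥0} (hp : 1 ≤ p) (hf : MemLp f p) :
    MemLp (mollify n f) p :=
  ⟨(continuous_mollify n (hf.locallyIntegrable (by exact_mod_cast hp))).aestronglyMeasurable,
    (eLpNorm_mollify_le n hf.1 hp).trans_lt hf.2⟩

lemma HasWeakLineDeriv.hasLineDerivAt_mollify {f f' : E → F} {v : E} (h : HasWeakLineDeriv f f' v)
    (hf : LocallyIntegrable f) (n : ℕ) (x : E) :
    HasLineDerivAt ℝ (mollify n f) (mollify n f' x) x v :=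
  h.hasLineDerivAt_convolution hf (shrinkingBump n).contDiff_normed
    (shrinkingBump n).hasCompactSupport_normed x

end Mollification

section RegularizedNorm

variable {E : Type*} [NormedAddCommGroup E]

/-- A smooth regularization of the norm, vanishing nowhere. -/
def regNorm (δ : ℝ) (x : E) : ℝ := √(‖x‖ ^ 2 + δ ^ 2)

variable {δ : ℝ}

lemma sq_regNorm (x : E) : regNorm δ x ^ 2 = ‖x‖ ^ 2 + δ ^ 2 := sq_sqrt (by positivity)

lemma norm_le_regNorm (x : E) : ‖x‖ ≤ regNorm δ x :=
  le_sqrt_of_sq_le (le_add_of_nonneg_right (sq_nonneg δ))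

lemma regNorm_nonneg (x : E) : 0 ≤ regNorm δ x := sqrt_nonneg _

lemma le_regNorm (x : E) : δ ≤ regNorm δ x :=
  le_sqrt_of_sq_le (le_add_of_nonneg_left (sq_nonneg ‖x‖))

lemma regNorm_pos (hδ : 0 < δ) (x : E) : 0 < regNorm δ x := hδ.trans_le (le_regNorm x)

@[fun_prop]
lemma continuous_regNorm : Continuous (regNorm δ : E → ℝ) := by
  unfold regNorm
  fun_prop

lemma tendsto_regNorm_zero (x : E) : Tendsto (fun δ ↦ regNorm δ x) (𝓝 0) (𝓝 ‖x‖) := by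
  have : Continuous fun δ ↦ regNorm δ x := by
    unfold regNorm
    fun_prop
  simpa [regNorm] using this.tendsto 0

variable [InnerProductSpace ℝ E]

/-- The component along `v` of the regularized radial field `x / regNorm δ x`. -/
def regRadial (δ : ℝ) (v x : E) : ℝ := inner ℝ v x / regNorm δ x

/-- The derivative of `regRadial δ v` along `v`. -/
def regRadialDeriv (δ : ℝ) (v x : E) : ℝ := (‖v‖ ^ 2 - regRadial δ v x ^ 2) / regNorm δ x

lemma hasLineDerivAt_regRadial (hδ : 0 < δ) (v x : E) :
    HasLineDerivAt ℝ (regRadial δ v) (regRadialDeriv δ v x) x v := by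
  have h_line : HasDerivAt (fun t : ℝ ↦ x + t • v) v 0 := by
    simpa using ((hasDerivAt_id (0 : ℝ)).smul_const v).const_add x
  have h_norm := (h_line.norm_sq.add_const (δ ^ 2)).sqrt (by positivity)
  have h_inner := (hasDerivAt_const (0 : ℝ) v).inner ℝ h_line
  have hpos := regNorm_pos hδ x
  refine HasDerivAt.congr_deriv (h_inner.div h_norm (by simpa [regNorm] using hpos.ne')) ?_
  simp only [zero_smul, add_zero, inner_zero_left, real_inner_self_eq_norm_sq,
    real_inner_comm v x, regRadialDeriv, regRadial]
  change (‖v‖ ^ 2 * regNorm δ x - inner ℝ v x * (2 * inner ℝ v x / (2 * regNorm δ x))) /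
    regNorm δ x ^ 2 = _
  field_simp

lemma abs_regRadial_le (v x : E) : |regRadial δ v x| ≤ ‖v‖ := by
  rw [regRadial, abs_div, abs_of_nonneg (regNorm_nonneg x)]
  refine div_le_of_le_mul₀ (regNorm_nonneg x) (norm_nonneg _) ?_
  exact (abs_real_inner_le_norm v x).trans (by gcongr; exact norm_le_regNorm x)

lemma regRadialDeriv_nonneg (hδ : 0 < δ) (v x : E) : 0 ≤ regRadialDeriv δ v x :=
  div_nonneg (sub_nonneg.2 (sq_le_sq.2 (by simpa using abs_regRadial_le (δ := δ) v x)))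
    (regNorm_pos hδ x).le

lemma regRadialDeriv_le (hδ : 0 < δ) (v x : E) : regRadialDeriv δ v x ≤ ‖v‖ ^ 2 / δ := by
  unfold regRadialDeriv
  gcongr
  · exact sub_le_self _ (sq_nonneg _)
  · exact le_regNorm x

@[fun_prop]
lemma continuous_regRadial (hδ : 0 < δ) (v : E) : Continuous (regRadial δ v) := by
  unfold regRadial
  fun_prop (disch := exact fun x ↦ (regNorm_pos hδ x).ne')

lemma continuous_regRadialDeriv (hδ : 0 < δ) (v : E) : Continuous (regRadialDeriv δ v) := by
  unfold regRadialDeriv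
  fun_prop (disch := first | exact hδ | exact fun x ↦ (regNorm_pos hδ x).ne')

lemma div_regNorm_le_sum_regRadialDeriv {ι : Type*} [Fintype ι] (b : OrthonormalBasis ι ℝ E)
    (hδ : 0 < δ) (x : E) :
    (Fintype.card ι - 1) / regNorm δ x ≤ ∑ i, regRadialDeriv δ (b i) x := by
  have hpos := regNorm_pos hδ x
  have radial_le_one : ‖x‖ ^ 2 / regNorm δ x ^ 2 ≤ 1 := by
    rw [div_le_one (by positivity), sq_regNorm]
    exact le_add_of_nonneg_right (sq_nonneg δ)
  simp_rw [regRadialDeriv, regRadial, ← Finset.sum_div, Finset.sum_sub_distrib, div_pow,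
    ← Finset.sum_div, b.sum_sq_inner_right, b.norm_eq_one]
  simp only [one_pow, Finset.sum_const, Finset.card_univ, nsmul_eq_mul, mul_one]
  gcongr

end RegularizedNorm

section HardyInequality

lemma eLpNorm_two_sq {α F : Type*} [MeasurableSpace α] [NormedAddCommGroup F] {μ : Measure α}
    {f : α → F} (hf : MemLp f 2 μ) : eLpNorm f 2 μ ^ 2 = ENNReal.ofReal (∫ x, ‖f x‖ ^ 2 ∂μ) := by
  rw [hf.eLpNorm_eq_integral_rpow_norm two_ne_zero ENNReal.ofNat_ne_top,
    ← ENNReal.ofReal_pow (by positivity)]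
  simp_rw [ENNReal.toReal_ofNat, rpow_ofNat]
  rw [← rpow_natCast, ← rpow_mul (by positivity)]
  norm_num

variable {E F : Type*} [NormedAddCommGroup E] [InnerProductSpace ℝ E] [FiniteDimensional ℝ E]
  [MeasurableSpace E] [BorelSpace E] [NormedAddCommGroup F]

lemma integrable_norm_sq_mul_regRadialDeriv {w : E → F} (hw : MemLp w 2) {δ : ℝ} (hδ : 0 < δ)
    (e y : E) : Integrable fun x ↦ ‖w x‖ ^ 2 * regRadialDeriv δ e (x - y) := by
  refine ((memLp_two_iff_integrable_sq_norm hw.1).1 hw).mul_bdd (c := ‖e‖ ^ 2 / δ)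
    ((continuous_regRadialDeriv hδ e).comp (continuous_sub_right y)).aestronglyMeasurable
    (.of_forall fun x ↦ ?_)
  rw [Real.norm_of_nonneg (regRadialDeriv_nonneg hδ _ _)]
  exact regRadialDeriv_le hδ _ _

variable [InnerProductSpace ℝ F]

lemma integral_norm_sq_mul_le_of_hasLineDerivAt {w w' : E → F} {h h' : E → ℝ} {v : E}
    (hw : MemLp w 2) (hw' : MemLp w' 2) (hderiv : ∀ x, HasLineDerivAt ℝ w (w' x) x v)
    (hh : Continuous h) (h_le : ∀ x, |h x| ≤ 1) (hderiv' : ∀ x, HasLineDerivAt ℝ h (h' x) x v)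
    (hint : Integrable fun x ↦ ‖w x‖ ^ 2 * h' x) :
    ∫ x, ‖w x‖ ^ 2 * h' x ≤ (∫ x, ‖w x‖ ^ 2) + ∫ x, ‖w' x‖ ^ 2 := by
  have hw_sq := (memLp_two_iff_integrable_sq_norm hw.1).1 hw
  have hw'_sq := (memLp_two_iff_integrable_sq_norm hw'.1).1 hw'
  have deriv_norm_sq (x : E) :
      HasLineDerivAt ℝ (fun x ↦ ‖w x‖ ^ 2) (2 * inner ℝ (w x) (w' x)) x v := by
    simpa [HasLineDerivAt] using (hderiv x).norm_sq
  have deriv_le (x : E) : ‖2 * inner ℝ (w x) (w' x)‖ ≤ ‖w x‖ ^ 2 + ‖w' x‖ ^ 2 := by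
    rw [norm_mul, Real.norm_two]
    nlinarith [norm_inner_le_norm (𝕜 := ℝ) (w x) (w' x), sq_nonneg (‖w x‖ - ‖w' x‖)]
  have hderiv_int : Integrable fun x ↦ 2 * inner ℝ (w x) (w' x) :=
    (hw_sq.add hw'_sq).mono' ((hw.1.inner hw'.1).const_mul 2) (.of_forall deriv_le)
  have hderiv_mul_int := hderiv_int.mul_bdd hh.aestronglyMeasurable (.of_forall h_le)
  calc ∫ x, ‖w x‖ ^ 2 * h' x = ∫ x, -(2 * inner ℝ (w x) (w' x) * h x) := by
        rw [integral_neg]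
        exact integral_bilinear_hasLineDerivAt_right_eq_neg_left_of_integrable
          (B := ContinuousLinearMap.mul ℝ ℝ) hderiv_mul_int hint
          (hw_sq.mul_bdd hh.aestronglyMeasurable (.of_forall h_le))
          (fun x _ ↦ deriv_norm_sq x) (fun x _ ↦ hderiv' x)
    _ ≤ ∫ x, (‖w x‖ ^ 2 + ‖w' x‖ ^ 2) := by
        refine integral_mono hderiv_mul_int.neg (hw_sq.add hw'_sq) fun x ↦ ?_
        refine (neg_le_abs _).trans ?_
        rw [abs_mul]
        exact (mul_le_of_le_one_right (abs_nonneg _) (h_le x)).trans (deriv_le x)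
    _ = (∫ x, ‖w x‖ ^ 2) + ∫ x, ‖w' x‖ ^ 2 := integral_add hw_sq hw'_sq

lemma integral_norm_sq_mul_regRadialDeriv_le {w w' : E → F} {e : E} (he : ‖e‖ = 1)
    (hw : MemLp w 2) (hw' : MemLp w' 2) (hderiv : ∀ x, HasLineDerivAt ℝ w (w' x) x e)
    {δ : ℝ} (hδ : 0 < δ) (y : E) :
    ∫ x, ‖w x‖ ^ 2 * regRadialDeriv δ e (x - y) ≤ (∫ x, ‖w x‖ ^ 2) + ∫ x, ‖w' x‖ ^ 2 := by
  refine integral_norm_sq_mul_le_of_hasLineDerivAt hw hw' hderiv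
    ((continuous_regRadial hδ e).comp (continuous_sub_right y))
    (fun x ↦ (abs_regRadial_le _ _).trans_eq he) (fun x ↦ ?_)
    (integrable_norm_sq_mul_regRadialDeriv hw hδ e y)
  simpa only [HasLineDerivAt, Function.comp_apply, add_sub_right_comm] using
    hasLineDerivAt_regRadial hδ e (x - y)

lemma lintegral_norm_sq_mul_div_regNorm_le {ι : Type*} [Fintype ι] (b : OrthonormalBasis ι ℝ E)
    {w : E → F} {w' : ι → E → F} (hw : MemLp w 2) (hw' : ∀ i, MemLp (w' i) 2)
    (hderiv : ∀ i x, HasLineDerivAt ℝ w (w' i x) x (b i)) {δ : ℝ} (hδ : 0 < δ) (y : E) :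
    ∫⁻ x, ENNReal.ofReal (‖w x‖ ^ 2 * ((Fintype.card ι - 1) / regNorm δ (x - y))) ≤
      Fintype.card ι * eLpNorm w 2 ^ 2 + ∑ i, eLpNorm (w' i) 2 ^ 2 := by
  have radialDeriv_int (i : ι) := integrable_norm_sq_mul_regRadialDeriv hw hδ (b i) y
  calc ∫⁻ x, ENNReal.ofReal (‖w x‖ ^ 2 * ((Fintype.card ι - 1) / regNorm δ (x - y)))
      ≤ ∫⁻ x, ENNReal.ofReal (∑ i, ‖w x‖ ^ 2 * regRadialDeriv δ (b i) (x - y)) := by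
        simp_rw [← Finset.mul_sum]
        gcongr
        exact div_regNorm_le_sum_regRadialDeriv b hδ _
    _ = ENNReal.ofReal (∑ i, ∫ x, ‖w x‖ ^ 2 * regRadialDeriv δ (b i) (x - y)) := by
        rw [← ofReal_integral_eq_lintegral_ofReal
          (integrable_finsetSum _ fun i _ ↦ radialDeriv_int i)
          (.of_forall fun x ↦ Finset.sum_nonneg fun i _ ↦
            mul_nonneg (sq_nonneg _) (regRadialDeriv_nonneg hδ _ _)),
          integral_finsetSum _ fun i _ ↦ radialDeriv_int i]
    _ ≤ ENNReal.ofReal (∑ i, ((∫ x, ‖w x‖ ^ 2) + ∫ x, ‖w' i x‖ ^ 2)) := by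
        gcongr with i
        exact integral_norm_sq_mul_regRadialDeriv_le (b.norm_eq_one i) hw (hw' i) (hderiv i) hδ y
    _ = ∑ i, (eLpNorm w 2 ^ 2 + eLpNorm (w' i) 2 ^ 2) := by
        rw [ENNReal.ofReal_sum_of_nonneg fun i _ ↦ by positivity]
        refine Finset.sum_congr rfl fun i _ ↦ ?_
        rw [ENNReal.ofReal_add (by positivity) (by positivity), eLpNorm_two_sq hw,
          eLpNorm_two_sq (hw' i)]
    _ = _ := by
        simp [Finset.sum_add_distrib]

lemma lintegral_norm_sq_mollify_mul_div_regNorm_le {ι : Type*} [Fintype ι]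
    (b : OrthonormalBasis ι ℝ E) {f : E → F} {f' : ι → E → F} (hf : MemLp f 2)
    (hf' : ∀ i, MemLp (f' i) 2) (hderiv : ∀ i, HasWeakLineDeriv f (f' i) (b i)) {δ : ℝ}
    (hδ : 0 < δ) (y : E) (n : ℕ) :
    ∫⁻ x, ENNReal.ofReal (‖mollify n f x‖ ^ 2 * ((Fintype.card ι - 1) / regNorm δ (x - y))) ≤
      Fintype.card ι * eLpNorm f 2 ^ 2 + ∑ i, eLpNorm (f' i) 2 ^ 2 := by
  refine (lintegral_norm_sq_mul_div_regNorm_le b (memLp_mollify n (p := 2) one_le_two hf)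
    (fun i ↦ memLp_mollify n (p := 2) one_le_two (hf' i))
    (fun i ↦ (hderiv i).hasLineDerivAt_mollify (hf.locallyIntegrable one_le_two) n) hδ y).trans ?_
  gcongr with i
  exacts [eLpNorm_mollify_le n hf.1 (p := 2) one_le_two,
    eLpNorm_mollify_le n (hf' i).1 (p := 2) one_le_two]

/-- A Hardy-type inequality, obtained by integrating the divergence of the unit radial field at `y`
against `‖f‖ ^ 2`. -/
theorem lintegral_norm_sq_mul_div_norm_sub_le [Nontrivial E] [CompleteSpace F] {ι : Type*}
    [Fintype ι] (b : OrthonormalBasis ι ℝ E) {f : E → F} {f' : ι → E → F} (hf : MemLp f 2)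
    (hf' : ∀ i, MemLp (f' i) 2) (hderiv : ∀ i, HasWeakLineDeriv f (f' i) (b i)) (y : E) :
    ∫⁻ x, ENNReal.ofReal (‖f x‖ ^ 2 * ((Fintype.card ι - 1) / ‖x - y‖)) ≤
      Fintype.card ι * eLpNorm f 2 ^ 2 + ∑ i, eLpNorm (f' i) 2 ^ 2 := by
  have hf_loc := hf.locallyIntegrable one_le_two
  let δ (n : ℕ) : ℝ := 1 / (n + 1)
  have hδ (n : ℕ) : 0 < δ n := by positivity
  let G (n : ℕ) (x : E) : ℝ≥0∞ := ENNReal.ofReal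
    (‖mollify n f x‖ ^ 2 * ((Fintype.card ι - 1) / regNorm (δ n) (x - y)))
  have G_meas (n : ℕ) : Measurable (G n) := by
    have := (continuous_mollify n hf_loc).norm.measurable
    unfold G
    fun_prop
  have G_lim : ∀ᵐ x, Tendsto (fun n ↦ G n x) atTop
      (𝓝 (ENNReal.ofReal (‖f x‖ ^ 2 * ((Fintype.card ι - 1) / ‖x - y‖)))) := by
    filter_upwards [ae_tendsto_mollify hf_loc, volume.ae_ne y] with x hx hxy
    have norm_lim := (tendsto_regNorm_zero (x - y)).comp tendsto_one_div_add_atTop_nhds_zero_nat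
    exact (ENNReal.continuous_ofReal.tendsto _).comp <| (hx.norm.pow 2).mul <|
      tendsto_const_nhds.div norm_lim (norm_ne_zero_iff.2 (sub_ne_zero.2 hxy))
  calc _ = ∫⁻ x, liminf (fun n ↦ G n x) atTop :=
        lintegral_congr_ae (G_lim.mono fun x hx ↦ hx.liminf_eq.symm)
    _ ≤ liminf (fun n ↦ ∫⁻ x, G n x) atTop := lintegral_liminf_le G_meas
    _ ≤ _ := liminf_le_of_frequently_le' <| .of_forall fun n ↦
        lintegral_norm_sq_mollify_mul_div_regNorm_le b hf hf' hderiv (hδ n) y n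

end HardyInequality

section ChargeDensity

variable {E F : Type*} [NormedAddCommGroup E] [InnerProductSpace ℝ E] [FiniteDimensional ℝ E]
  [MeasurableSpace E] [BorelSpace E] [NormedAddCommGroup F]

/-- The charge distribution `‖u‖ ^ 2 dx` of a wave function `u`. -/
def chargeMeasure (u : E → F) : Measure E :=
  volume.withDensity fun x ↦ ENNReal.ofReal (‖u x‖ ^ 2)

instance sigmaFinite_chargeMeasure (u : E → F) : SigmaFinite (chargeMeasure u) :=
  SigmaFinite.withDensity_ofReal _

instance nullSingletonClass_chargeMeasure [Nontrivial E] (u : E → F) :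
    NullSingletonClass (chargeMeasure u) :=
  nullSingletonClass_withDensity _

lemma isFiniteMeasure_chargeMeasure {u : E → F} (hu : MemLp u 2) :
    IsFiniteMeasure (chargeMeasure u) :=
  isFiniteMeasure_withDensity_ofReal ((memLp_two_iff_integrable_sq_norm hu.1).1 hu).2

lemma rieszPotential_chargeMeasure {u : E → F} (hu : AEStronglyMeasurable u) (s : ℝ) (y : E) :
    rieszPotential s (chargeMeasure u) y =
      ∫⁻ x, ENNReal.ofReal (‖u x‖ ^ 2 / ‖x - y‖ ^ s) := by
  rw [rieszPotential, chargeMeasure, lintegral_withDensity_eq_lintegral_mul₀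
    (hu.norm.aemeasurable.pow_const 2).ennreal_ofReal (by fun_prop)]
  refine lintegral_congr fun x ↦ ?_
  rw [Pi.mul_apply, ← ENNReal.ofReal_mul (by positivity), rpow_neg (norm_nonneg _), div_eq_mul_inv]

lemma toReal_rieszPotential_chargeMeasure {u : E → F} (hu : AEStronglyMeasurable u) (s : ℝ)
    (y : E) :
    (rieszPotential s (chargeMeasure u) y).toReal = ∫ x, ‖u x‖ ^ 2 / ‖x - y‖ ^ s := by
  have hu_norm := hu.norm.aemeasurable
  have integrand_meas : AEMeasurable fun x ↦ ‖u x‖ ^ 2 / ‖x - y‖ ^ s := by fun_prop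
  rw [rieszPotential_chargeMeasure hu, integral_eq_lintegral_of_nonneg_ae
    (.of_forall fun x ↦ by positivity) integrand_meas.aestronglyMeasurable]

lemma toReal_rieszEnergy_chargeMeasure {u : E → F} (hu : AEStronglyMeasurable u) {s : ℝ}
    (hfin : ∀ y, rieszPotential s (chargeMeasure u) y < ⊤) :
    (rieszEnergy s (chargeMeasure u)).toReal =
      ∫ x, ∫ y, ‖u x‖ ^ 2 * ‖u y‖ ^ 2 / ‖x - y‖ ^ s := by
  have inner_integral (x : E) : ∫ y, ‖u x‖ ^ 2 * ‖u y‖ ^ 2 / ‖x - y‖ ^ s =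
      (ENNReal.ofReal (‖u x‖ ^ 2)).toReal • (rieszPotential s (chargeMeasure u) x).toReal := by
    simp_rw [toReal_rieszPotential_chargeMeasure hu, ENNReal.toReal_ofReal (sq_nonneg ‖u x‖),
      smul_eq_mul, ← integral_const_mul, mul_div_assoc, norm_sub_rev x]
  have hpot := measurable_rieszPotential (chargeMeasure u) s
  simp_rw [inner_integral]
  rw [← integral_withDensity_eq_integral_toReal_smul₀
      (hu.norm.aemeasurable.pow_const 2).ennreal_ofReal (.of_forall fun _ ↦ ENNReal.ofReal_lt_top),
    ← chargeMeasure, integral_toReal hpot.aemeasurable (.of_forall hfin), rieszEnergy]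

theorem exists_forall_rieszPotential_one_chargeMeasure_le {F : Type*} [NormedAddCommGroup F]
    [InnerProductSpace ℝ F] [CompleteSpace F] {ι : Type*} [Fintype ι]
    (hι : 2 ≤ Fintype.card ι) (b : OrthonormalBasis ι ℝ E) {u : E → F} {u' : ι → E → F}
    (hu : MemLp u 2) (hu' : ∀ i, MemLp (u' i) 2)
    (hderiv : ∀ i, HasWeakLineDeriv u (u' i) (b i)) :
    ∃ C : ℝ≥0, ∀ y, rieszPotential 1 (chargeMeasure u) y ≤ C := by
  have : Nontrivial E := nontrivial_of_finrank_pos (R := ℝ) <| by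
    rw [finrank_eq_card_basis b.toBasis]; lia
  have one_le_card_sub_one : (1 : ℝ) ≤ Fintype.card ι - 1 := by
    rw [le_sub_iff_add_le]; exact_mod_cast hι
  have bound_ne_top : Fintype.card ι * eLpNorm u 2 ^ 2 + ∑ i, eLpNorm (u' i) 2 ^ 2 ≠ ⊤ := by
    simp [ENNReal.mul_eq_top, hu.eLpNorm_ne_top, (hu' _).eLpNorm_ne_top]
  lift Fintype.card ι * eLpNorm u 2 ^ 2 + ∑ i, eLpNorm (u' i) 2 ^ 2 to ℝ≥0
    using bound_ne_top with C hC
  refine ⟨C, fun y ↦ ?_⟩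
  rw [hC, rieszPotential_chargeMeasure hu.1]
  refine le_trans ?_ (lintegral_norm_sq_mul_div_norm_sub_le b hu hu' hderiv y)
  gcongr with x
  rw [rpow_one, div_eq_mul_one_div]
  gcongr

end ChargeDensity

/-- Completing the square: `‖v‖ ^ 2 - 2 Re ⟨v, g⟩ = ‖v - g‖ ^ 2 - ‖g‖ ^ 2` is least at `v = g`. -/
theorem sInf_sub_two_mul_integral_re_mul_add {X : Type*} [MeasurableSpace X]
    {μ : Measure X} {g : X → ℝ} (hg : MemLp g 2 μ) (c : ℝ) :
    sInf {r : ℝ | ∃ v : X → ℂ, MemLp v 2 μ ∧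
      r = c - 2 * (∫ x, (v x).re * g x ∂μ) + ∫ x, ‖v x‖ ^ 2 ∂μ} = c - ∫ x, g x ^ 2 ∂μ := by
  refine IsLeast.csInf_eq ⟨⟨fun x ↦ (g x : ℂ), hg.ofReal, ?_⟩, ?_⟩
  · simp only [Complex.ofReal_re, Complex.norm_real, Real.norm_eq_abs, sq_abs, ← pow_two]
    ring
  · rintro r ⟨v, hv, rfl⟩
    have hvg_int : Integrable (fun x ↦ (v x).re * g x) μ := hv.re.integrable_mul hg
    have hv_int := (memLp_two_iff_integrable_sq_norm hv.1).1 hv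
    have hg_int := (memLp_two_iff_integrable_sq hg.1).1 hg
    have pointwise (x : X) : 2 * ((v x).re * g x) ≤ ‖v x‖ ^ 2 + g x ^ 2 := by
      nlinarith [sq_nonneg ((v x).re - g x), Complex.sq_norm (v x), Complex.re_sq_le_normSq (v x)]
    have := integral_mono (hvg_int.const_mul 2) (hv_int.add hg_int) pointwise
    simp only [Pi.add_apply] at this
    rw [integral_const_mul, integral_add hv_int hg_int] at this
    linarith

theorem statement4_general {E F : Type*} [NormedAddCommGroup E] [InnerProductSpace ℝ E]
    [FiniteDimensional ℝ E] [MeasurableSpace E] [BorelSpace E] [NormedAddCommGroup F]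
    [InnerProductSpace ℝ F] [CompleteSpace F] (b : OrthonormalBasis (Fin 3) ℝ E) {u : E → F}
    {u' : Fin 3 → E → F} (hu : MemLp u 2) (hu' : ∀ i, MemLp (u' i) 2)
    (hweak : ∀ i, HasWeakLineDeriv u (u' i) (b i)) {g : E → ℝ}
    (hg : ∀ y, g y = (1 / (2 * π ^ 2)) * ∫ x, ‖u x‖ ^ 2 / ‖x - y‖ ^ 2) :
    MemLp g 2 ∧
    (∫ y, g y ^ 2) = (1 / (4 * π)) * (∫ x, ∫ y, ‖u x‖ ^ 2 * ‖u y‖ ^ 2 / ‖x - y‖) ∧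
    sInf {r : ℝ | ∃ v : E → ℂ, MemLp v 2 ∧
        r = (∫ x, ∑ i, ‖u' i x‖ ^ 2) - 2 * (∫ y, (v y).re * g y) + ∫ y, ‖v y‖ ^ 2} =
      (∫ x, ∑ i, ‖u' i x‖ ^ 2) -
        (1 / (4 * π)) * (∫ x, ∫ y, ‖u x‖ ^ 2 * ‖u y‖ ^ 2 / ‖x - y‖) := by
  have finrank_eq : finrank ℝ E = 3 := by simp [finrank_eq_card_basis b.toBasis]
  have : Nontrivial E := nontrivial_of_finrank_pos (R := ℝ) (by simp [finrank_eq])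
  have := isFiniteMeasure_chargeMeasure hu
  obtain ⟨C, potential_le⟩ :=
    exists_forall_rieszPotential_one_chargeMeasure_le (by simp) b hu hu' hweak
  have energy_ne_top := (rieszEnergy_lt_top potential_le).ne
  have energy_eq : (rieszEnergy 1 (chargeMeasure u)).toReal =
      ∫ x, ∫ y, ‖u x‖ ^ 2 * ‖u y‖ ^ 2 / ‖x - y‖ := by
    simpa only [rpow_one] using toReal_rieszEnergy_chargeMeasure hu.1
      fun y ↦ (potential_le y).trans_lt ENNReal.coe_lt_top
  have g_eq : g = fun y ↦ 1 / (2 * π ^ 2) * (rieszPotential 2 (chargeMeasure u) y).toReal := by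
    ext y
    simp_rw [hg, toReal_rieszPotential_chargeMeasure hu.1, rpow_ofNat]
  have g_memLp : MemLp g 2 :=
    g_eq ▸ (memLp_toReal_rieszPotential_two _ finrank_eq energy_ne_top).const_mul _
  have g_sq : ∫ y, g y ^ 2 = 1 / (4 * π) * ∫ x, ∫ y, ‖u x‖ ^ 2 * ‖u y‖ ^ 2 / ‖x - y‖ := by
    simp_rw [g_eq, mul_pow, integral_const_mul,
      integral_toReal_rieszPotential_two_sq _ finrank_eq energy_ne_top, energy_eq]
    field_simp
    ring
  exact ⟨g_memLp, g_sq, by rw [sInf_sub_two_mul_integral_re_mul_add g_memLp, g_sq]⟩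

/-- For normalized `u ∈ H¹(ℝ³;ℂ)` (with weak partial derivatives `u'`),
the field `g_u(y) = (1/(2π²)) ∫ |u(x)|²/|x−y|² dx` is in `L²`, its squared norm equals
`(1/(4π)) ∬ |u(x)|²|u(y)|²/|x−y|`, and the infimum over `v ∈ L²` of
`‖∇u‖² − 2Re⟨v, g_u⟩ + ‖v‖²` equals `‖∇u‖² − (1/(4π)) ∬ |u(x)|²|u(y)|²/|x−y|`. -/
theorem statement4
    (u : EuclideanSpace ℝ (Fin 3) → ℂ)
    (u' : Fin 3 → EuclideanSpace ℝ (Fin 3) → ℂ)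
    (hu : MemLp u 2 volume)
    (hu' : ∀ i, MemLp (u' i) 2 volume)
    (hweak : ∀ i, ∀ φ : EuclideanSpace ℝ (Fin 3) → ℝ,
      ContDiff ℝ (⊤ : ℕ∞) φ → HasCompactSupport φ →
      ∫ x, u x * (fderiv ℝ φ x (EuclideanSpace.single i 1) : ℂ) =
        - ∫ x, u' i x * (φ x : ℂ))
    (hnorm : ∫ x, ‖u x‖ ^ 2 = 1)
    (g : EuclideanSpace ℝ (Fin 3) → ℝ)
    (hg : ∀ y, g y = (1 / (2 * π ^ 2)) * ∫ x, ‖u x‖ ^ 2 / ‖x - y‖ ^ 2) :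
    MemLp g 2 volume ∧
    (∫ y, g y ^ 2) =
      (1 / (4 * π)) * (∫ x, ∫ y, ‖u x‖ ^ 2 * ‖u y‖ ^ 2 / ‖x - y‖) ∧
    sInf { r : ℝ | ∃ v : EuclideanSpace ℝ (Fin 3) → ℂ, MemLp v 2 volume ∧
        r = (∫ x, ∑ i, ‖u' i x‖ ^ 2) - 2 * (∫ y, (v y).re * g y) + ∫ y, ‖v y‖ ^ 2 } =
      (∫ x, ∑ i, ‖u' i x‖ ^ 2) -
        (1 / (4 * π)) * (∫ x, ∫ y, ‖u x‖ ^ 2 * ‖u y‖ ^ 2 / ‖x - y‖) := by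
  exact statement4_general (EuclideanSpace.basisFun (Fin 3) ℝ) hu hu'
    (fun i φ hφ hφ_supp ↦ by simpa [mul_comm] using hweak i φ hφ hφ_supp) hg
end
end
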